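/- Merging two reconstruction symbols with differing posteriors strictly decreases mutual information: let p be a probability mass function on a finite type 𝒳, k : 𝒳 → PMF(𝒳') a channel with induced joint P(x, x̂) = p(x)·k(x)(x̂), and let x̂₁ ≠ x̂₂ be points of 𝒳' with marginal probabilities P(X̂ = x̂₁) > 0 and P(X̂ = x̂₂) > 0 such that there exists x ∈ 𝒳 with P(X = x | X̂ = x̂₁) ≠ P(X = x | X̂ = x̂₂). Define the merged channel k̃ by k̃(x)(x̂₁) = k(x)(x̂₁) + k(x)(x̂₂), k̃(x)(x̂₂) = 0, and k̃(x)(x̂) = k(x)(x̂) for all other x̂. Then the mutual information of the joint induced by (p, k̃) is strictly smaller than that of the joint induced by (p, k): I(X;X̃) < I(X;X̂). -/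

import Mathlib

open scoped BigOperators

/-- Joint distribution P(a,b) = p(a)·k(a)(b) induced by a source `p` and a channel `k`,
as a real number. -/
noncomputable def jointP {A B : Type*} [Fintype A] [Fintype B] (p : PMF A) (k : A → PMF B)
    (a : A) (b : B) : ℝ :=
  (p a * k a b).toReal

/-- Marginal distribution of the second coordinate of the joint induced by `(p, k)`. -/
noncomputable def margSnd {A B : Type*} [Fintype A] [Fintype B] (p : PMF A) (k : A → PMF B)
    (b : B) : ℝ :=
  ∑ a, jointP p k a b

/-- Mutual information I(A;B) = ∑_{a,b} P(a,b)·log(P(a,b)/(P(a)·P(b))) of the joint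
induced by `(p, k)`; the convention 0·log 0 = 0 holds automatically in Lean. -/
noncomputable def mutualInfo {A B : Type*} [Fintype A] [Fintype B] (p : PMF A)
    (k : A → PMF B) : ℝ :=
  ∑ a, ∑ b, jointP p k a b * Real.log (jointP p k a b / ((p a).toReal * margSnd p k b))

/-- Expected distortion E[d(A,B)] under the joint induced by `(p, k)`. -/
noncomputable def expDist {A B : Type*} [Fintype A] [Fintype B] (p : PMF A) (k : A → PMF B)
    (d : A → B → ℝ) : ℝ :=
  ∑ a, ∑ b, jointP p k a b * d a b

/-- Rate-distortion function: infimum of mutual information over all channels `A → PMF B`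
meeting the expected-distortion constraint `≤ D`. -/
noncomputable def rate {A B : Type*} [Fintype A] [Fintype B] (p : PMF A) (d : A → B → ℝ)
    (D : ℝ) : ℝ :=
  sInf { r : ℝ | ∃ k : A → PMF B, expDist p k d ≤ D ∧ r = mutualInfo p k }

/-- Conditional probability P(A = a | B = b) under the joint induced by `(p, k)`. -/
noncomputable def condProb {A B : Type*} [Fintype A] [Fintype B] (p : PMF A) (k : A → PMF B)
    (a : A) (b : B) : ℝ :=
  jointP p k a b / margSnd p k b

/-!
Mutual information is a sum over output symbols, the term of a symbol depending only on its column
of the joint distribution. Each summand `u * log (u / m)`, with `u` a joint and `m` a product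
probability, is the perspective `m * f (u / m)` of the strictly convex function `f t = t * log t`,
and the perspective of a convex function is subadditive in `(u, m)`. Merging two symbols adds their
columns, so the two summands of each input are replaced by at most their sum, and by strictly less
at an input where the two posteriors differ.
-/

section Perspective

variable {𝕜 E : Type*} [Field 𝕜] [AddCommMonoid E] [Module 𝕜 E] {m n : 𝕜}

theorem div_add_smul_inv_smul_add (hm : m ≠ 0) (hn : n ≠ 0) (x y : E) :
    (m / (m + n)) • m⁻¹ • x + (n / (m + n)) • n⁻¹ • y = (m + n)⁻¹ • (x + y) := by
  have hm' : m / (m + n) * m⁻¹ = (m + n)⁻¹ := by field_simp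
  have hn' : n / (m + n) * n⁻¹ = (m + n)⁻¹ := by field_simp
  rw [smul_smul, smul_smul, hm', hn', smul_add]

theorem add_smul_div_add_smul_add (hmn : m + n ≠ 0) (x y : E) :
    (m + n) • ((m / (m + n)) • x + (n / (m + n)) • y) = m • x + n • y := by
  rw [smul_add, smul_smul, smul_smul, mul_div_cancel₀ m hmn, mul_div_cancel₀ n hmn]

variable [LinearOrder 𝕜] [IsStrictOrderedRing 𝕜] {β : Type*} [AddCommMonoid β] [PartialOrder β]
  [Module 𝕜 β] {s : Set E} {f : E → β} {x y : E}

theorem perspective_add_le_of_convexOn [PosSMulMono 𝕜 β] (hf : ConvexOn 𝕜 s f)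
    (hm : 0 < m) (hn : 0 < n) (hx : m⁻¹ • x ∈ s) (hy : n⁻¹ • y ∈ s) :
    (m + n) • f ((m + n)⁻¹ • (x + y)) ≤ m • f (m⁻¹ • x) + n • f (n⁻¹ • y) := by
  have hmn : 0 < m + n := add_pos hm hn
  rw [← div_add_smul_inv_smul_add hm.ne' hn.ne', ← add_smul_div_add_smul_add hmn.ne' (f _)]
  exact smul_le_smul_of_nonneg_left ((convexOn_iff_div.1 hf).2 hx hy hm.le hn.le hmn) hmn.le

theorem perspective_add_lt_of_strictConvexOn [PosSMulStrictMono 𝕜 β] (hf : StrictConvexOn 𝕜 s f)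
    (hm : 0 < m) (hn : 0 < n) (hx : m⁻¹ • x ∈ s) (hy : n⁻¹ • y ∈ s) (hne : m⁻¹ • x ≠ n⁻¹ • y) :
    (m + n) • f ((m + n)⁻¹ • (x + y)) < m • f (m⁻¹ • x) + n • f (n⁻¹ • y) := by
  have hmn : 0 < m + n := add_pos hm hn
  rw [← div_add_smul_inv_smul_add hm.ne' hn.ne', ← add_smul_div_add_smul_add hmn.ne' (f _)]
  exact smul_lt_smul_of_pos_left ((strictConvexOn_iff_div.1 hf).2 hx hy hne hm hn) hmn

end Perspective

section LogSum

variable {a b m n : ℝ}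

theorem smul_inv_smul_mul_log (hm : m ≠ 0) (a : ℝ) :
    m • (m⁻¹ • a * Real.log (m⁻¹ • a)) = a * Real.log (a / m) := by
  rw [smul_eq_mul, smul_eq_mul, inv_mul_eq_div, ← mul_assoc, mul_div_cancel₀ a hm]

theorem add_mul_log_div_add_lt (ha : 0 ≤ a) (hb : 0 ≤ b) (hm : 0 < m) (hn : 0 < n)
    (hne : a / m ≠ b / n) :
    (a + b) * Real.log ((a + b) / (m + n)) < a * Real.log (a / m) + b * Real.log (b / n) := by
  rw [← smul_inv_smul_mul_log hm.ne', ← smul_inv_smul_mul_log hn.ne',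
    ← smul_inv_smul_mul_log (add_pos hm hn).ne']
  refine perspective_add_lt_of_strictConvexOn Real.strictConvexOn_mul_log hm hn
    (smul_nonneg (inv_nonneg.2 hm.le) ha) (smul_nonneg (inv_nonneg.2 hn.le) hb) ?_
  simpa only [smul_eq_mul, inv_mul_eq_div] using hne

theorem add_mul_log_div_add_le (ha : 0 ≤ a) (hb : 0 ≤ b) (hm : 0 ≤ m) (hn : 0 ≤ n)
    (hma : m = 0 → a = 0) (hnb : n = 0 → b = 0) :
    (a + b) * Real.log ((a + b) / (m + n)) ≤ a * Real.log (a / m) + b * Real.log (b / n) := by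
  rcases hm.eq_or_lt' with rfl | hm
  · simp [hma rfl]
  rcases hn.eq_or_lt' with rfl | hn
  · simp [hnb rfl]
  rw [← smul_inv_smul_mul_log hm.ne', ← smul_inv_smul_mul_log hn.ne',
    ← smul_inv_smul_mul_log (add_pos hm hn).ne']
  exact perspective_add_le_of_convexOn Real.convexOn_mul_log hm hn
    (smul_nonneg (inv_nonneg.2 hm.le) ha) (smul_nonneg (inv_nonneg.2 hn.le) hb)

end LogSum

theorem sum_lt_sum_of_eq_off_pair {ι M : Type*} [Fintype ι] [AddCommMonoid M] [PartialOrder M]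
    [IsOrderedCancelAddMonoid M] {f g : ι → M} {i j : ι} (hij : i ≠ j)
    (heq : ∀ l, l ≠ i → l ≠ j → f l = g l) (hlt : f i + f j < g i + g j) :
    ∑ l, f l < ∑ l, g l := by
  classical
  have hcompl : ∑ l ∈ {i, j}ᶜ, f l = ∑ l ∈ {i, j}ᶜ, g l :=
    Finset.sum_congr rfl fun l hl => by
      simp only [Finset.mem_compl, Finset.mem_insert, Finset.mem_singleton, not_or] at hl
      exact heq l hl.1 hl.2
  rw [← Finset.sum_add_sum_compl {i, j} f, ← Finset.sum_add_sum_compl {i, j} g,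
    Finset.sum_pair hij, Finset.sum_pair hij, hcompl]
  exact add_lt_add_left hlt _

section ColumnInfo

variable {A : Type*} [Fintype A] {q u v : A → ℝ}

/-- The contribution to a mutual information of one output symbol, where `q` is the distribution of
the input and `u` is the column of the joint distribution at that symbol, so that `∑ a, u a` is the
marginal probability of the symbol. -/
noncomputable def columnInfo (q u : A → ℝ) : ℝ :=
  ∑ a, u a * Real.log (u a / (q a * ∑ a', u a'))

theorem columnInfo_zero (q : A → ℝ) : columnInfo q 0 = 0 := by
  simp [columnInfo]

theorem columnInfo_add_lt (hq : 0 ≤ q) (hu : 0 ≤ u) (hv : 0 ≤ v)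
    (hqu : ∀ a, q a = 0 → u a = 0) (hqv : ∀ a, q a = 0 → v a = 0)
    (hu_pos : 0 < ∑ a, u a) (hv_pos : 0 < ∑ a, v a)
    (hne : ∃ a, u a / ∑ a', u a' ≠ v a / ∑ a', v a') :
    columnInfo q (u + v) < columnInfo q u + columnInfo q v := by
  obtain ⟨x, hx⟩ := hne
  have hqx : q x ≠ 0 := fun h => hx (by rw [hqu x h, hqv x h, zero_div, zero_div])
  have hqx_pos : 0 < q x := (hq x).lt_of_ne' hqx
  simp only [columnInfo, Pi.add_apply, Finset.sum_add_distrib, mul_add]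
  rw [← Finset.sum_add_distrib]
  refine Finset.sum_lt_sum (fun a _ => ?_) ⟨x, Finset.mem_univ x, ?_⟩
  · exact add_mul_log_div_add_le (hu a) (hv a) (mul_nonneg (hq a) hu_pos.le)
      (mul_nonneg (hq a) hv_pos.le)
      (fun h => hqu a ((mul_eq_zero_iff_right hu_pos.ne').1 h))
      (fun h => hqv a ((mul_eq_zero_iff_right hv_pos.ne').1 h))
  · refine add_mul_log_div_add_lt (hu x) (hv x) (mul_pos hqx_pos hu_pos)
      (mul_pos hqx_pos hv_pos) fun h => hx ?_
    rwa [div_mul_eq_div_div_swap, div_mul_eq_div_div_swap, div_left_inj' hqx] at h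

end ColumnInfo

section Joint

variable {A B : Type*} [Fintype A] [Fintype B] {p : PMF A}

theorem jointP_nonneg (p : PMF A) (k : A → PMF B) (a : A) (b : B) : 0 ≤ jointP p k a b :=
  ENNReal.toReal_nonneg

theorem jointP_eq_zero_of_source_eq_zero {a : A} (h : (p a).toReal = 0) (k : A → PMF B) (b : B) :
    jointP p k a b = 0 := by
  rw [jointP, ENNReal.toReal_mul, h, zero_mul]

theorem jointP_eq_zero_of_channel_eq_zero {k : A → PMF B} {a : A} {b : B} (h : k a b = 0) :
    jointP p k a b = 0 := by
  rw [jointP, h, mul_zero, ENNReal.toReal_zero]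

theorem jointP_eq_add {C : Type*} [Fintype C] {k : A → PMF B} {l : A → PMF C} {a : A} {b₁ b₂ : B}
    {c : C} (h : l a c = k a b₁ + k a b₂) :
    jointP p l a c = jointP p k a b₁ + jointP p k a b₂ := by
  simp only [jointP, ENNReal.toReal_mul]
  rw [h, ENNReal.toReal_add ((k a).apply_ne_top _) ((k a).apply_ne_top _), mul_add]

theorem mutualInfo_eq_sum_columnInfo (p : PMF A) (k : A → PMF B) :
    mutualInfo p k = ∑ b, columnInfo (fun a => (p a).toReal) (jointP p k · b) :=
  Finset.sum_comm

end Joint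

/-- Merging two reconstruction symbols of positive marginal probability
with differing posteriors strictly decreases mutual information: the merged channel k̃
(k̃(x)(x̂₁) = k(x)(x̂₁) + k(x)(x̂₂), k̃(x)(x̂₂) = 0, and otherwise identical to k) satisfies
I(X;X̃) < I(X;X̂). -/
theorem merge_strictly_decreases_mutualInfo
    {𝒳 𝒳' : Type*} [Fintype 𝒳] [Fintype 𝒳'] [Nonempty 𝒳] [Nonempty 𝒳']
    (p : PMF 𝒳) (k : 𝒳 → PMF 𝒳')
    (xhat₁ xhat₂ : 𝒳') (hne : xhat₁ ≠ xhat₂)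
    (hpos₁ : 0 < margSnd p k xhat₁) (hpos₂ : 0 < margSnd p k xhat₂)
    (hpost : ∃ x : 𝒳, condProb p k x xhat₁ ≠ condProb p k x xhat₂)
    (ktil : 𝒳 → PMF 𝒳')
    (hk₁ : ∀ x, ktil x xhat₁ = k x xhat₁ + k x xhat₂)
    (hk₂ : ∀ x, ktil x xhat₂ = 0)
    (hk₃ : ∀ x xhat, xhat ≠ xhat₁ → xhat ≠ xhat₂ → ktil x xhat = k x xhat) :
    mutualInfo p ktil < mutualInfo p k := by
  have hcol₁ : (jointP p ktil · xhat₁) = (jointP p k · xhat₁) + (jointP p k · xhat₂) :=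
    funext fun x => jointP_eq_add (hk₁ x)
  have hcol₂ : (jointP p ktil · xhat₂) = 0 :=
    funext fun x => jointP_eq_zero_of_channel_eq_zero (hk₂ x)
  have hcol₃ (b : 𝒳') (h₁ : b ≠ xhat₁) (h₂ : b ≠ xhat₂) :
      (jointP p ktil · b) = (jointP p k · b) :=
    funext fun x => by rw [jointP, jointP, hk₃ x b h₁ h₂]
  rw [mutualInfo_eq_sum_columnInfo, mutualInfo_eq_sum_columnInfo]
  refine sum_lt_sum_of_eq_off_pair hne (fun b h₁ h₂ => by rw [hcol₃ b h₁ h₂]) ?_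
  rw [hcol₁, hcol₂, columnInfo_zero, add_zero]
  exact columnInfo_add_lt (fun _ => ENNReal.toReal_nonneg)
    (jointP_nonneg p k · xhat₁) (jointP_nonneg p k · xhat₂)
    (fun _ h => jointP_eq_zero_of_source_eq_zero h k xhat₁)
    (fun _ h => jointP_eq_zero_of_source_eq_zero h k xhat₂) hpos₁ hpos₂ hpost
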